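/- arXiv:1108.2977 — 2 statements merged into one kernel-verified Lean document; each statement's English description precedes it below -/
import Mathlib

section
/- Let m ≥ 1 and 0 ≤ k < m be integers. For every θ = (θ₁,…,θ_m) ∈ ℝ^m, the following identity of complex numbers holds: A_δ(θ) · e_k(2cos θ₁, …, 2cos θ_m) = Σ_{j=0}^{⌊k/2⌋} (−1)^j · N(m+2j−k, j) · A_{δ+ω_{k−2j}}(θ), where e_k denotes the k-th elementary symmetric polynomial in m variables. (This expresses the elementary symmetric function S_{m,k} of the 2cos θ_j as a linear combination of irreducible characters of SO(2m), after multiplying both sides by the Weyl denominator A_δ.) -/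
open scoped BigOperators

/-- The alternating sum `A_λ(θ) = Σ_{w ∈ W_m} sgn(w) exp(i Σ_j (w·λ)_j θ_j)`, where
`W_m` consists of pairs `(σ, ε)` with `σ` a permutation of `{1,…,m}` and
`ε ∈ {±1}^m` with `∏ ε_j = 1`, and `(w·λ)_j = ε_j λ_{σ⁻¹(j)}`. -/
noncomputable def Avec (m : ℕ) (lam : Fin m → ℤ) (θ : Fin m → ℝ) : ℂ :=
  ∑ σ : Equiv.Perm (Fin m),
    ∑ ε ∈ Finset.univ.filter (fun ε : Fin m → ℤˣ => (∏ j, (ε j : ℤ)) = 1),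
      ((Equiv.Perm.sign σ : ℤ) : ℂ) *
        Complex.exp (Complex.I *
          ∑ j : Fin m, (((ε j : ℤ) * lam (σ⁻¹ j) : ℤ) : ℂ) * ((θ j : ℝ) : ℂ))

/-- `δ = (m-1, m-2, …, 1, 0)`. -/
def deltaVec (m : ℕ) : Fin m → ℤ := fun j => (m : ℤ) - 1 - (j : ℤ)

/-- `ω_q`: first `q` entries equal to `1`, the rest `0`. -/
def omegaVec (m q : ℕ) : Fin m → ℤ := fun j => if (j : ℕ) < q then 1 else 0

/-- `N₀(n,k)`: the number of `k`-tuples `(j₁,…,j_k)` of integers with `1 ≤ j₁`,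
`j_{i+1} ≥ j_i + 2`, and `j_k ≤ n − 1`. -/
noncomputable def N0 (n k : ℕ) : ℕ :=
  Nat.card {t : Fin k → ℤ //
    (∀ h : 0 < k, 1 ≤ t ⟨0, h⟩) ∧
    (∀ i : ℕ, ∀ h : i + 1 < k, t ⟨i, by omega⟩ + 2 ≤ t ⟨i + 1, h⟩) ∧
    (∀ h : 0 < k, t ⟨k - 1, by omega⟩ ≤ (n : ℤ) - 1)}

/-- `N(n,0) = 1` and `N(n,k) = N₀(n,k) + N₀(n−2,k−1)` for `k ≥ 1`. -/
noncomputable def Nfun (n k : ℕ) : ℕ := if k = 0 then 1 else N0 n k + N0 (n - 2) (k - 1)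


/-!
With `x_j = 2 cos θ_j`, summing over the signs turns `A_λ(θ)` into the alternant
`det (q_{λ_i}(x_j))`, where `q_0 = 1` and, for `n ≥ 1`, `q_n` is the monic (rescaled Chebyshev)
polynomial `C_n` with `C_n(2 cos θ) = 2 cos nθ`; the restriction `∏ ε_j = 1` costs only a factor
`2` when exactly one `λ_i` vanishes, and this factor is the one distinguishing `q_0` from `C_0 = 2`.

Since `q_n` is monic of degree `n`, adjoining one variable `t` to the alternant of
`q_0, …, q_{m-1}` multiplies it by `∏ (x_j - t)`, while Laplace expansion along the row of `t`
gives a combination of the `q_i(t)` whose coefficients are, up to sign, the alternants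
`A_{δ+ω_{m-i}}`. Comparing coefficients of `t^{m-k}` leaves the coefficients of `q_n`. They come
from `C_n = S_n - S_{n-2}` and `S_n = ∑ (-1)^k (n-k choose k) X^{n-2k}`, where
`n-k choose k = N₀(n, k)`: subtracting `i` from the `i`-th entry of a tuple counted by `N₀`
turns gaps of at least two into strict monotonicity.
-/

open Polynomial Finset

section Counting

theorem card_strictMono_mem_finset {α : Type*} [LinearOrder α] (A : Finset α) (k : ℕ) :
    Nat.card {s : Fin k → α // StrictMono s ∧ ∀ i, s i ∈ A} = (#A).choose k := by
  let embeddings : {s : Fin k → α // StrictMono s ∧ ∀ i, s i ∈ A} ≃ (Fin k ↪o A) :=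
    { toFun := fun s => OrderEmbedding.ofStrictMono (fun i => ⟨s.1 i, s.2.2 i⟩) s.2.1
      invFun := fun e => ⟨fun i => e i, e.strictMono, fun i => (e i).2⟩
      left_inv := fun _ => rfl
      right_inv := fun _ => rfl }
  rw [Nat.card_congr (embeddings.trans Set.powersetCard.ofFinEmbEquiv), Set.powersetCard.card]
  simp

theorem strictMono_sub_val_iff {k : ℕ} (t : Fin k → ℤ) :
    StrictMono (fun i => t i - (i : ℕ)) ↔
      ∀ i : ℕ, ∀ h : i + 1 < k, t ⟨i, by lia⟩ + 2 ≤ t ⟨i + 1, h⟩ := by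
  cases k with
  | zero => simp [Subsingleton.strictMono]
  | succ k =>
    rw [Fin.strictMono_iff_lt_succ, Fin.forall_iff]
    refine forall_congr' fun i => ⟨fun gap h => ?_, fun gap h => ?_⟩
    · have := gap (by lia)
      simp only [Fin.castSucc_mk, Fin.succ_mk] at this
      lia
    · have := gap (by lia)
      simp only [Fin.castSucc_mk, Fin.succ_mk]
      lia

theorem spaced_iff_strictMono_sub_val {k : ℕ} (n : ℕ) (t : Fin k → ℤ) :
    ((∀ h : 0 < k, 1 ≤ t ⟨0, h⟩) ∧
      (∀ i : ℕ, ∀ h : i + 1 < k, t ⟨i, by lia⟩ + 2 ≤ t ⟨i + 1, h⟩) ∧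
      (∀ h : 0 < k, t ⟨k - 1, by lia⟩ ≤ (n : ℤ) - 1)) ↔
    StrictMono (fun i => t i - (i : ℕ)) ∧ ∀ i, t i - (i : ℕ) ∈ Icc (1 : ℤ) (n - k) := by
  rw [← strictMono_sub_val_iff]
  cases k with
  | zero => simp [Subsingleton.strictMono]
  | succ k =>
    have last_bound_iff : t (Fin.last k) ≤ (n : ℤ) - 1 ↔
        t (Fin.last k) - (Fin.last k : ℕ) ≤ n - (k + 1 : ℕ) := by
      rw [Fin.val_last]
      lia
    constructor
    · rintro ⟨first, mono, last⟩
      refine ⟨mono, fun i => mem_Icc.2 ⟨?_, ?_⟩⟩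
      · exact le_trans (by simpa using first k.succ_pos) (mono.monotone (Fin.zero_le i))
      · exact (mono.monotone (Fin.le_last i)).trans (last_bound_iff.1 (last k.succ_pos))
    · rintro ⟨mono, bounded⟩
      simp only [mem_Icc] at bounded
      exact ⟨fun _ => by simpa using (bounded 0).1, mono,
        fun _ => last_bound_iff.2 (bounded (Fin.last k)).2⟩

theorem N0_eq_choose (n k : ℕ) : N0 n k = (n - k).choose k := by
  let shift : Fin k → ℤ := fun i => (i : ℕ)
  have subtract_index := Nat.card_congr ((Equiv.subRight shift).subtypeEquiv
    (q := fun s => StrictMono s ∧ ∀ i, s i ∈ Icc (1 : ℤ) (n - k))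
    (spaced_iff_strictMono_sub_val n))
  rw [N0, subtract_index]
  refine (card_strictMono_mem_finset (Icc (1 : ℤ) (n - k)) k).trans ?_
  rw [Int.card_Icc]
  congr 1
  lia

end Counting

section ChebyshevCoefficients

variable (R : Type*) [CommRing R]

theorem coeff_chebyshevS_eq_zero {n i : ℕ} (h : n < i ∨ Odd (n + i)) :
    (Chebyshev.S R n).coeff i = 0 := by
  induction n using Nat.twoStepInduction generalizing i with
  | zero =>
    have : i ≠ 0 := by rintro rfl; simp at h
    simp [coeff_one, this]
  | one =>
    have : i ≠ 1 := by rintro rfl; revert h; decide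
    simp [coeff_X, this.symm]
  | more n ih ih' =>
    simp only [Nat.odd_iff] at h ih ih'
    push_cast
    rw [Chebyshev.S_add_two, coeff_sub, ih (by lia)]
    cases i with
    | zero => simp
    | succ i =>
      rw [coeff_X_mul, ← Nat.cast_succ, ih' (by lia), sub_zero]

theorem coeff_chebyshevS (i k : ℕ) :
    (Chebyshev.S R (i + 2 * k : ℕ)).coeff i = (-1) ^ k * ((i + k).choose k : R) := by
  induction hn : i + 2 * k using Nat.twoStepInduction generalizing i k with
  | zero =>
    obtain ⟨rfl, rfl⟩ : i = 0 ∧ k = 0 := by lia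
    simp
  | one =>
    obtain ⟨rfl, rfl⟩ : i = 1 ∧ k = 0 := by lia
    simp
  | more n ih ih' =>
    push_cast
    rw [Chebyshev.S_add_two, coeff_sub, ← Nat.cast_succ]
    rcases i with _ | i <;> rcases k with _ | k
    · lia
    · rw [mul_coeff_zero, coeff_X_zero, ih 0 k (by lia)]
      simp [pow_succ]
    · rw [coeff_X_mul, ih' i 0 (by lia), coeff_chebyshevS_eq_zero R (by lia)]
      simp
    · rw [coeff_X_mul, ih' i (k + 1) (by lia), ih (i + 1) k (by lia),
        show i + 1 + (k + 1) = i + (k + 1) + 1 by ring, Nat.choose_succ_succ,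
        show i + 1 + k = i + (k + 1) by ring]
      push_cast
      ring

theorem chebyshevC_eq_S_sub_S (n : ℤ) :
    Chebyshev.C R n = Chebyshev.S R n - Chebyshev.S R (n - 2) := by
  rw [Chebyshev.C_eq_S_sub_X_mul_S, Chebyshev.S_sub_two]
  ring

/-- The polynomials `1, X, X ^ 2 - 2, …`: the rescaled Chebyshev polynomials of the first kind with
the constant `C 0 = 2` replaced by `1`, so that each of them is monic. -/
noncomputable def monicChebyshevC (n : ℤ) : R[X] := if n = 0 then 1 else Chebyshev.C R n

theorem coeff_monicChebyshevC_eq_zero {n i : ℕ} (h : n < i ∨ Odd (n + i)) :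
    (monicChebyshevC R n).coeff i = 0 := by
  rcases n with _ | _ | n
  · have : i ≠ 0 := by rintro rfl; simp at h
    simp [monicChebyshevC, coeff_one, this]
  · have : i ≠ 1 := by rintro rfl; revert h; decide
    simp [monicChebyshevC, coeff_X, this.symm]
  · simp only [Nat.odd_iff] at h
    rw [monicChebyshevC, if_neg (by lia), chebyshevC_eq_S_sub_S, coeff_sub,
      coeff_chebyshevS_eq_zero R (by simp only [Nat.odd_iff]; lia),
      show ((n + 1 + 1 : ℕ) : ℤ) - 2 = n by push_cast; ring,
      coeff_chebyshevS_eq_zero R (by simp only [Nat.odd_iff]; lia), sub_zero]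

theorem coeff_monicChebyshevC (i k : ℕ) :
    (monicChebyshevC R (i + 2 * k : ℕ)).coeff i = (-1) ^ k * (Nfun (i + 2 * k) k : R) := by
  rcases k with _ | k
  · rcases i with _ | _ | i
    · simp [monicChebyshevC, Nfun]
    · simp [monicChebyshevC, Nfun]
    · have leading := coeff_chebyshevS R (i + 2) 0
      rw [mul_zero, add_zero] at leading ⊢
      rw [monicChebyshevC, if_neg (by lia), chebyshevC_eq_S_sub_S, coeff_sub, leading,
        show ((i + 2 : ℕ) : ℤ) - 2 = i by push_cast; ring,
        coeff_chebyshevS_eq_zero R (.inl (by lia))]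
      simp [Nfun]
  · rw [monicChebyshevC, if_neg (by lia), chebyshevC_eq_S_sub_S, coeff_sub, coeff_chebyshevS,
      show ((i + 2 * (k + 1) : ℕ) : ℤ) - 2 = (i + 2 * k : ℕ) by push_cast; ring, coeff_chebyshevS,
      Nfun, if_neg k.succ_ne_zero, N0_eq_choose, N0_eq_choose,
      show i + 2 * (k + 1) - (k + 1) = i + (k + 1) by lia,
      show i + 2 * (k + 1) - 2 - (k + 1 - 1) = i + k by lia, Nat.add_sub_cancel]
    push_cast
    ring

theorem natDegree_monicChebyshevC_le (n : ℕ) : (monicChebyshevC R n).natDegree ≤ n :=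
  natDegree_le_iff_coeff_eq_zero.2 fun _ hi => coeff_monicChebyshevC_eq_zero R (.inl hi)

theorem monic_monicChebyshevC (n : ℕ) : (monicChebyshevC R n).Monic :=
  monic_of_natDegree_le_of_coeff_eq_one n (natDegree_monicChebyshevC_le R n)
    (by simpa [Nfun] using coeff_monicChebyshevC R n 0)

theorem natDegree_monicChebyshevC [Nontrivial R] (n : ℕ) :
    (monicChebyshevC R n).natDegree = n :=
  natDegree_eq_of_le_of_coeff_ne_zero (natDegree_monicChebyshevC_le R n)
    (by simpa [Nfun] using (coeff_monicChebyshevC R n 0).trans_ne (by simp [Nfun]))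

theorem prod_eval_chebyshevC_of_unique_zero {ι : Type*} [Fintype ι] {lam : ι → ℤ} {i₀ : ι}
    (h : ∀ i, lam i = 0 ↔ i = i₀) (x : ι → R) :
    ∏ i, (Chebyshev.C R (lam i)).eval (x i) =
      2 * ∏ i, (monicChebyshevC R (lam i)).eval (x i) := by
  classical
  have chebyshevC_eq (i : ι) : (Chebyshev.C R (lam i)).eval (x i) =
      (if i = i₀ then 2 else 1) * (monicChebyshevC R (lam i)).eval (x i) := by
    by_cases hi : i = i₀
    · simp [hi, monicChebyshevC, (h i₀).2 rfl]
    · simp [hi, monicChebyshevC, h]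
  simp only [chebyshevC_eq, prod_mul_distrib, prod_ite_eq', mem_univ, if_true]

end ChebyshevCoefficients

section Alternants

variable {R : Type*} [CommRing R]

/-- The alternant `det (f_j(x_i))` of a family of polynomials at a family of points. -/
def alternant {ι : Type*} [Fintype ι] [DecidableEq ι] (f : ι → R[X]) (x : ι → R) : R :=
  (Matrix.of fun i j => (f j).eval (x i)).det

theorem alternant_comp_perm {ι : Type*} [Fintype ι] [DecidableEq ι] (σ : Equiv.Perm ι)
    (f : ι → R[X]) (x : ι → R) :
    alternant (f ∘ σ) x = (Equiv.Perm.sign σ : ℤ) * alternant f x :=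
  Matrix.det_permute' σ (Matrix.of fun i j => (f j).eval (x i))

theorem alternant_map {ι S : Type*} [Fintype ι] [DecidableEq ι] [CommRing S] (φ : R →+* S)
    (f : ι → R[X]) (x : ι → R) :
    alternant (fun i => (f i).map φ) (φ ∘ x) = φ (alternant f x) := by
  rw [alternant, alternant, RingHom.map_det]
  congr 1
  ext i j
  simp [eval_map_apply]

variable {m : ℕ}

theorem alternant_cons_eq_sum (p : Fin (m + 1) → R[X]) (t : R) (x : Fin m → R) :
    alternant p (Fin.cons t x : Fin (m + 1) → R) =
      ∑ i : Fin (m + 1), (-1) ^ (i : ℕ) * (p i).eval t * alternant (p ∘ i.succAbove) x :=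
  Matrix.det_succ_row_zero _

theorem alternant_cons_eq_prod_mul (p : Fin (m + 1) → R[X]) (hdeg : ∀ i, (p i).natDegree = i)
    (hmonic : ∀ i, (p i).Monic) (t : R) (x : Fin m → R) :
    alternant p (Fin.cons t x : Fin (m + 1) → R) =
      (∏ j, (x j - t)) * alternant (p ∘ Fin.castSucc) x := by
  rw [alternant, alternant,
    ← Matrix.det_eval_matrixOfPolynomials_eq_det_vandermonde _ p hdeg hmonic,
    ← Matrix.det_eval_matrixOfPolynomials_eq_det_vandermonde x (p ∘ Fin.castSucc)
      (fun i => hdeg i.castSucc) (fun i => hmonic i.castSucc),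
    Matrix.det_vandermonde, Matrix.det_vandermonde, Fin.prod_univ_succ]
  simp

theorem prod_C_sub_X_mul_alternant (p : Fin (m + 1) → R[X]) (hdeg : ∀ i, (p i).natDegree = i)
    (hmonic : ∀ i, (p i).Monic) (x : Fin m → R) :
    (∏ j, (C (x j) - X)) * C (alternant (p ∘ Fin.castSucc) x) =
      ∑ i : Fin (m + 1), C ((-1) ^ (i : ℕ) * alternant (p ∘ i.succAbove) x) * p i := by
  -- Adjoin the indeterminate itself as an extra point, over the ring `R[X]`.
  have product := alternant_cons_eq_prod_mul (fun i => (p i).map C)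
    (fun i => by rw [natDegree_map_eq_of_injective C_injective, hdeg])
    (fun i => (hmonic i).map C) X (C ∘ x)
  rw [alternant_cons_eq_sum] at product
  have alternant_C (e : Fin m → Fin (m + 1)) :
      alternant ((fun i => (p i).map C) ∘ e) (C ∘ x) = C (alternant (p ∘ e) x) :=
    alternant_map C (p ∘ e) x
  simp only [alternant_C, Function.comp_apply] at product
  rw [← product]
  refine sum_congr rfl fun i _ => ?_
  rw [eval_map, eval₂_C_X, C_mul, C_pow, C_neg, C_1]
  ring

theorem coeff_prod_C_sub_X {ι : Type*} (s : Finset ι) (x : ι → R) {r : ℕ} (hr : r ≤ #s) :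
    (∏ j ∈ s, (C (x j) - X)).coeff r =
      (-1) ^ r * ∑ t ∈ s.powersetCard (#s - r), ∏ j ∈ t, x j := by
  have prod_eq : ∏ j ∈ s, (C (x j) - X) = C ((-1) ^ #s) * ((s.val.map x).map (X - C ·)).prod := by
    rw [Multiset.map_map, C_pow, C_neg, C_1]
    exact (prod_congr rfl fun j _ => (neg_sub X (C (x j))).symm).trans (prod_neg _)
  have card_eq : (s.val.map x).card = #s := Multiset.card_map x s.val
  rw [prod_eq, coeff_C_mul, Multiset.prod_X_sub_C_coeff _ (by rwa [card_eq]), card_eq,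
    Finset.esymm_map_val, ← mul_assoc, ← pow_add]
  congr 1
  rw [show #s + (#s - r) = 2 * (#s - r) + r by lia, pow_add, pow_mul]
  simp

theorem alternant_mul_esymm (p : Fin (m + 1) → R[X]) (hdeg : ∀ i, (p i).natDegree = i)
    (hmonic : ∀ i, (p i).Monic) (x : Fin m → R) {k : ℕ} (hk : k ≤ m) :
    alternant (p ∘ Fin.castSucc) x * ∑ s ∈ univ.powersetCard k, ∏ j ∈ s, x j =
      ∑ i : Fin (m + 1), (-1) ^ (m - k + i) * (p i).coeff (m - k) *
        alternant (p ∘ i.succAbove) x := by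
  have coeff_eq := congrArg (coeff · (m - k)) (prod_C_sub_X_mul_alternant p hdeg hmonic x)
  simp only [coeff_mul_C, coeff_C_mul, finsetSum_coeff] at coeff_eq
  rw [coeff_prod_C_sub_X _ _ (by simp), card_univ, Fintype.card_fin, Nat.sub_sub_self hk]
    at coeff_eq
  have sign_sq : (-1 : R) ^ (m - k) * (-1) ^ (m - k) = 1 := by simp [← mul_pow]
  calc
    _ = (-1) ^ (m - k) * ((-1) ^ (m - k) * (∑ s ∈ univ.powersetCard k, ∏ j ∈ s, x j) *
          alternant (p ∘ Fin.castSucc) x) := by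
      linear_combination (-alternant (p ∘ Fin.castSucc) x *
        ∑ s ∈ univ.powersetCard k, ∏ j ∈ s, x j) * sign_sq
    _ = _ := by
      rw [coeff_eq, mul_sum]
      exact sum_congr rfl fun i _ => by ring

end Alternants

section WeylSums

theorem two_mul_sum_even_signs_prod {R ι : Type*} [CommRing R] [Fintype ι] [DecidableEq ι]
    (f : ι → ℤˣ → R) :
    2 * ∑ ε : ι → ℤˣ with (∏ j, (ε j : ℤ)) = 1, ∏ j, f j (ε j) =
      ∏ j, (f j 1 + f j (-1)) + ∏ j, (f j 1 - f j (-1)) := by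
  have sum_units (g : ℤˣ → R) : ∑ e, g e = g 1 + g (-1) := by
    rw [show (univ : Finset ℤˣ) = {1, -1} by decide, sum_pair (by decide)]
  have prod_add : ∏ j, (f j 1 + f j (-1)) = ∑ ε : ι → ℤˣ, ∏ j, f j (ε j) := by
    simp only [← sum_units, prod_univ_sum, Fintype.piFinset_univ]
  have prod_sub : ∏ j, (f j 1 - f j (-1)) =
      ∑ ε : ι → ℤˣ, ((∏ j, (ε j : ℤ) : ℤ) : R) * ∏ j, f j (ε j) := by
    have sub_eq (j : ι) : f j 1 - f j (-1) = ∑ e : ℤˣ, ((e : ℤ) : R) * f j e := by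
      simp [sub_eq_add_neg]
    simp only [sub_eq, prod_univ_sum, Fintype.piFinset_univ, prod_mul_distrib, Int.cast_prod]
  rw [prod_add, prod_sub, sum_filter, mul_sum, ← sum_add_distrib]
  refine sum_congr rfl fun ε _ => ?_
  rw [← Units.coe_prod]
  rcases Int.units_eq_one_or (∏ j, ε j) with h | h <;> simp [h, two_mul]

variable {m : ℕ}

theorem two_mul_sum_even_signs_exp {μ : Fin m → ℤ} (hμ : ∃ j, μ j = 0) (θ : Fin m → ℝ) :
    2 * ∑ ε : Fin m → ℤˣ with (∏ j, (ε j : ℤ)) = 1,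
        Complex.exp (Complex.I * ∑ j, ((ε j * μ j : ℤ) : ℂ) * (θ j : ℂ)) =
      ∏ j, (Chebyshev.C ℂ (μ j)).eval ((2 * Real.cos (θ j) : ℝ) : ℂ) := by
  obtain ⟨j₀, hj₀⟩ := hμ
  have difference_vanishes : ∏ j, (Complex.exp (Complex.I * (((1 : ℤˣ) * μ j : ℤ) * θ j)) -
      Complex.exp (Complex.I * (((-1 : ℤˣ) * μ j : ℤ) * θ j))) = 0 :=
    prod_eq_zero (mem_univ j₀) (by simp [hj₀])
  simp only [mul_sum Finset.univ _ Complex.I, Complex.exp_sum]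
  rw [two_mul_sum_even_signs_prod
    fun j e => Complex.exp (Complex.I * ((e * μ j : ℤ) * θ j)), difference_vanishes, add_zero]
  refine prod_congr rfl fun j _ => ?_
  push_cast
  rw [Chebyshev.C_two_mul_complex_cos, Complex.two_cos]
  congr 2 <;> ring

theorem Avec_eq_alternant {lam : Fin m → ℤ} {i₀ : Fin m} (h : ∀ i, lam i = 0 ↔ i = i₀)
    (θ : Fin m → ℝ) :
    Avec m lam θ = alternant (fun i => monicChebyshevC ℂ (lam i))
      (fun j => ((2 * Real.cos (θ j) : ℝ) : ℂ)) := by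
  rw [Avec, alternant, Matrix.det_apply]
  refine sum_congr rfl fun σ _ => ?_
  rw [← mul_sum, Units.smul_def, zsmul_eq_mul]
  congr 1
  have hσ : ∃ j, lam (σ⁻¹ j) = 0 := ⟨σ i₀, by simp [h]⟩
  apply mul_left_cancel₀ (two_ne_zero' ℂ)
  rw [two_mul_sum_even_signs_exp hσ, ← Equiv.prod_comp σ]
  simpa using prod_eval_chebyshevC_of_unique_zero ℂ h fun i => ((2 * Real.cos (θ (σ i)) : ℝ) : ℂ)

theorem deltaVec_add_omegaVec (q : Fin (m + 1)) (l : Fin m) :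
    deltaVec m l + omegaVec m q l = ((q.succAbove l).rev : ℕ) := by
  simp only [deltaVec, omegaVec, Fin.val_rev, Fin.succAbove, Fin.lt_def, Fin.val_castSucc]
  split_ifs <;> simp only [Fin.val_castSucc, Fin.val_succ] <;> lia

theorem Avec_deltaVec_add_omegaVec {q : Fin (m + 1)} (hq : (q : ℕ) < m) (θ : Fin m → ℝ) :
    Avec m (fun l => deltaVec m l + omegaVec m q l) θ =
      (Equiv.Perm.sign (Fin.revPerm : Equiv.Perm (Fin m)) : ℤ) *
        alternant ((fun i : Fin (m + 1) => monicChebyshevC ℂ (i : ℕ)) ∘ q.rev.succAbove)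
          (fun j => ((2 * Real.cos (θ j) : ℝ) : ℂ)) := by
  have unique_zero (l : Fin m) :
      deltaVec m l + omegaVec m q l = 0 ↔ l = ⟨m - 1, by lia⟩ := by
    simp only [deltaVec, omegaVec, Fin.ext_iff]
    split_ifs <;> lia
  rw [Avec_eq_alternant unique_zero, ← alternant_comp_perm]
  congr 1
  ext1 l
  simp [deltaVec_add_omegaVec, Fin.rev_succAbove]

theorem Avec_deltaVec_mul_esymm {k : ℕ} (hk : k < m) (θ : Fin m → ℝ) :
    Avec m (deltaVec m) θ *
        ∑ s ∈ univ.powersetCard k, ∏ j ∈ s, ((2 * Real.cos (θ j) : ℝ) : ℂ) =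
      ∑ q ∈ range (m + 1), (-1) ^ (m - k + (m - q)) *
        (monicChebyshevC ℂ (m - q : ℕ)).coeff (m - k) *
          Avec m (fun l => deltaVec m l + omegaVec m q l) θ := by
  have delta_eq : deltaVec m = fun l => deltaVec m l + omegaVec m (0 : Fin (m + 1)) l := by
    simp [omegaVec]
  have laplace := alternant_mul_esymm (fun i : Fin (m + 1) => monicChebyshevC ℂ (i : ℕ))
    (fun i => natDegree_monicChebyshevC ℂ i) (fun i => monic_monicChebyshevC ℂ i)
    (fun j => ((2 * Real.cos (θ j) : ℝ) : ℂ)) hk.le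
  rw [delta_eq, Avec_deltaVec_add_omegaVec (by simp; lia), Fin.rev_zero, Fin.succAbove_last,
    ← delta_eq, mul_assoc, laplace, mul_sum, ← Equiv.sum_comp Fin.revPerm, sum_range]
  refine sum_congr rfl fun q _ => ?_
  have rev_val : (q.rev : ℕ) = m - q := by simp [Fin.val_rev]
  rw [Fin.revPerm_apply, rev_val]
  rcases (Nat.lt_succ_iff.1 q.isLt).lt_or_eq with hq | hq
  · rw [Avec_deltaVec_add_omegaVec hq]
    ring
  · rw [coeff_monicChebyshevC_eq_zero ℂ (.inl (by lia))]
    ring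

end WeylSums

theorem sum_range_eq_sum_sub_two_mul {M : Type*} [AddCommMonoid M] {k m : ℕ} (hk : k ≤ m)
    {f : ℕ → M} (hf : ∀ q, k < q ∨ Odd (k + q) → f q = 0) :
    ∑ q ∈ range (m + 1), f q = ∑ j ∈ range (k / 2 + 1), f (k - 2 * j) := by
  symm
  refine sum_of_injOn (fun j => k - 2 * j) ?_ ?_ ?_ fun _ _ => rfl
  · intro a ha b hb hab
    simp only [coe_range, Set.mem_Iio] at ha hb hab
    lia
  · intro j _
    simp only [coe_range, Set.mem_Iio]
    lia
  · intro q _ hq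
    refine hf q ?_
    by_contra! h
    rw [Nat.not_odd_iff] at h
    refine hq ⟨(k - q) / 2, ?_, ?_⟩
    · simp only [coe_range, Set.mem_Iio]
      lia
    · dsimp only
      lia

/-- Expansion of `A_δ(θ) · e_k(2cos θ₁,…,2cos θ_m)` as a linear combination of the
alternating sums `A_{δ+ω_{k−2j}}` (the expansion of `S_{m,k}` into irreducible
characters of `SO(2m)`, multiplied by the Weyl denominator `A_δ`). -/
theorem smk_expansion (m k : ℕ) (hm : 1 ≤ m) (hk : k < m) (θ : Fin m → ℝ) :
    Avec m (deltaVec m) θ *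
      (∑ s ∈ (Finset.univ : Finset (Fin m)).powersetCard k,
        ∏ j ∈ s, ((2 * Real.cos (θ j) : ℝ) : ℂ)) =
    ∑ j ∈ Finset.range (k / 2 + 1),
      (-1 : ℂ) ^ j * (Nfun (m + 2 * j - k) j : ℂ) *
        Avec m (fun i => deltaVec m i + omegaVec m (k - 2 * j) i) θ := by
  rw [Avec_deltaVec_mul_esymm hk, sum_range_eq_sum_sub_two_mul hk.le]
  · refine sum_congr rfl fun j hj => ?_
    have hjk : 2 * j ≤ k := by rw [mem_range] at hj; lia
    have degree_eq : m - (k - 2 * j) = m - k + 2 * j := by lia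
    have sign_eq : (-1 : ℂ) ^ (m - k + (m - k + 2 * j)) = 1 := Even.neg_one_pow ⟨m - k + j, by ring⟩
    rw [degree_eq, sign_eq, one_mul, coeff_monicChebyshevC, ← Nat.sub_add_comm hk.le]
  · intro q hq
    rw [coeff_monicChebyshevC_eq_zero ℂ (by simp only [Nat.odd_iff] at *; lia), mul_zero, zero_mul]
end

section
/- Let 0 ≤ α < 1 and C > 0, and let B ⊆ ℤ be a set of integers such that for every real T ≥ 1 the number of n ∈ B with |n| ≤ T is at most C·T^α. Then for every δ > 0 and every θ₀ ∈ ℝ there exists an infinitely differentiable function f : ℝ → ℂ which is periodic with period 2π, satisfies f(θ₀) = 1, vanishes at every θ ∈ ℝ whose distance to the set θ₀ + 2πℤ is at least δ, and whose Fourier coefficients vanish on B: ∫₀^{2π} f(θ) e^{−inθ} dθ = 0 for every n ∈ B. -/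
open scoped BigOperators

/-!
The counting bound makes `∑ 1 / |n|` over `B` finite, so some `m` lies outside `B`; modulating by
`e^{imθ}` moves `m` to `0`. Start from a smooth bump concentrated near `2πℤ` with nonzero mean.
Finitely many frequencies `k ≠ 0` are killed by the operators `f ↦ f' - ikf`, which multiply the
`n`-th coefficient by `i(n - k)` and do not enlarge the support. All remaining frequencies `n` are
killed at once by averaging translates against the infinite Bernoulli convolution of the measures
`(δ_a + δ_{-a}) / 2` with `a = π / (2n)`: it is supported in a small interval because
`∑ π / (2|n|)` is small, and its characteristic function `∏ cos (at)` vanishes at each such `n`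
and is `1` at `0`. The result has nonzero mean, so it is nonzero somewhere near `2πℤ`, and a
translation places that point at `θ₀`.
-/

open MeasureTheory ProbabilityTheory Filter Topology Set
open scoped Real

section Counting

theorem summable_rpow_neg_of_ncard_le_nat {α C s : ℝ} {A : Set ℕ} (hα : 0 ≤ α) (hs : α < s)
    (hA : ∀ N : ℕ, 1 ≤ N → ({n ∈ A | n ≤ N}.ncard : ℝ) ≤ C * N ^ α) :
    Summable (A.indicator fun n ↦ (n : ℝ) ^ (-s)) := by
  -- Abel summation, applied to the Dirichlet series of the indicator function of `A`.
  let f : ℕ → ℂ := A.indicator 1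
  have hsum : ∀ N : ℕ, ∑ n ∈ Finset.Icc 1 N, ‖f n‖ ≤ ({n ∈ A | n ≤ N}.ncard : ℝ) := fun N ↦ by
    classical
    have hcard : ∑ n ∈ Finset.Icc 1 N, ‖f n‖ = ({n ∈ Finset.Icc 1 N | n ∈ A}.card : ℝ) := by
      simp [f, indicator_apply, apply_ite norm]
    rw [hcard, ← ncard_coe_finset]
    refine Nat.cast_le.2 (ncard_le_ncard (fun n hn ↦ ?_) ((finite_le_nat N).subset fun n hn ↦ hn.2))
    simp only [Finset.coe_filter, Finset.mem_Icc, mem_ofPred_eq] at hn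
    exact ⟨hn.2, hn.1.2⟩
  have hO : (fun N : ℕ ↦ ∑ n ∈ Finset.Icc 1 N, ‖f n‖) =O[atTop] fun N ↦ (N : ℝ) ^ α := by
    refine .of_bound C (eventually_ge_atTop 1 |>.mono fun N hN ↦ ?_)
    rw [Real.norm_of_nonneg (by positivity), Real.norm_of_nonneg (by positivity)]
    exact (hsum N).trans (hA N hN)
  refine (LSeriesSummable_of_sum_norm_bigO (s := s) hO hα (by simpa)).norm.congr fun n ↦ ?_
  have hs0 : -s ≠ 0 := by linarith
  by_cases hn : n ∈ A
  · rcases eq_or_ne n 0 with rfl | hn0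
    · simp [hn, Real.zero_rpow hs0]
    · simp [hn0, f, hn, Real.rpow_neg]
  · simp [LSeries.norm_term_eq, hn, f]

theorem summable_rpow_neg_of_ncard_le_int {α C s : ℝ} {B : Set ℤ} (hα : 0 ≤ α) (hs : α < s)
    (hB : ∀ T : ℝ, 1 ≤ T → ({n : ℤ | n ∈ B ∧ |(n : ℝ)| ≤ T}.ncard : ℝ) ≤ C * T ^ α) :
    Summable fun n : B ↦ |(n : ℝ)| ^ (-s) := by
  have hfin : ∀ T : ℝ, {n : ℤ | n ∈ B ∧ |(n : ℝ)| ≤ T}.Finite := fun T ↦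
    (finite_Icc (-⌊T⌋) ⌊T⌋).subset fun n hn ↦
      abs_le.1 (Int.le_floor.2 (by exact_mod_cast hn.2))
  have hhalf : ∀ g : ℕ → ℤ, Function.Injective g → (∀ n, |(g n : ℝ)| = n) →
      Summable fun n ↦ B.indicator (fun n : ℤ ↦ |(n : ℝ)| ^ (-s)) (g n) := fun g hg habs ↦ by
    have hind : (fun n ↦ B.indicator (fun n : ℤ ↦ |(n : ℝ)| ^ (-s)) (g n)) =
        (g ⁻¹' B).indicator fun n ↦ (n : ℝ) ^ (-s) := by
      ext n
      simpa only [Function.comp_def, habs] using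
        (indicator_comp_right g (s := B) (g := fun n : ℤ ↦ |(n : ℝ)| ^ (-s))).symm
    rw [hind]
    refine summable_rpow_neg_of_ncard_le_nat (C := C) hα hs fun N hN ↦ ?_
    refine le_trans ?_ (hB N (by exact_mod_cast hN))
    exact Nat.cast_le.2 (ncard_le_ncard_of_injOn g
      (fun n hn ↦ ⟨hn.1, by simpa [habs] using hn.2⟩) hg.injOn (hfin N))
  exact summable_subtype_iff_indicator.2 (.of_nat_of_neg
    (hhalf _ Nat.cast_injective (by simp))
    (hhalf (-·) (neg_injective.comp Nat.cast_injective) (by simp)))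

theorem summable_inv_abs_preimage_add {B : Set ℤ} (hB : Summable fun n : B ↦ |(n : ℝ)|⁻¹)
    (m : ℤ) : Summable fun n : ((· + m) ⁻¹' B : Set ℤ) ↦ |(n : ℝ)|⁻¹ := by
  have hinj : Function.Injective fun n : ((· + m) ⁻¹' B : Set ℤ) ↦ (⟨n + m, n.2⟩ : B) :=
    fun n k h ↦ Subtype.ext (by simpa using h)
  refine .of_norm_bounded_eventually ((hB.comp_injective hinj).mul_left (1 + |(m : ℝ)|)) ?_
  filter_upwards [Subtype.coe_injective.tendsto_cofinite.eventually (eventually_cofinite_ne (-m))]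
    with n hn
  rcases eq_or_ne (n : ℤ) 0 with h0 | h0
  · simpa [h0] using by positivity
  have hn1 : 1 ≤ |(n : ℝ)| := by exact_mod_cast Int.one_le_abs h0
  have hnm : 0 < |(n + m : ℝ)| := abs_pos.2 (by exact_mod_cast mt eq_neg_of_add_eq_zero_left hn)
  have hle : |(n + m : ℝ)| ≤ (1 + |(m : ℝ)|) * |(n : ℝ)| := by
    nlinarith [abs_add_le (n : ℝ) m, abs_nonneg (m : ℝ)]
  simp only [norm_inv, Real.norm_eq_abs, abs_abs, Function.comp_apply, Int.cast_add]
  rwa [← div_eq_mul_inv, inv_le_comm₀ (by positivity) (by positivity), inv_div,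
    div_le_iff₀' (by positivity)]

theorem exists_notMem_of_summable_inv_abs {B : Set ℤ}
    (hB : Summable fun n : B ↦ |(n : ℝ)|⁻¹) : ∃ m, m ∉ B := by
  by_contra! h
  refine Real.not_summable_natCast_inv ?_
  simpa [Function.comp_def] using
    hB.comp_injective (i := fun n : ℕ ↦ ⟨n, h n⟩) fun m n hmn ↦ by simpa using hmn

end Counting

section InfiniteConvolution

variable {ι E : Type*} [Countable ι] [NormedAddCommGroup E] [InnerProductSpace ℝ E]
  [SecondCountableTopology E] [MeasurableSpace E] [BorelSpace E]

theorem hasProd_charFun_map_tsum {Ω : Type*} [MeasurableSpace Ω] {P : Measure Ω}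
    [IsProbabilityMeasure P] {X : ι → Ω → E} (hX : ∀ k, AEMeasurable (X k) P)
    (hindep : iIndepFun X P) (hsum : ∀ᵐ ω ∂P, Summable fun k ↦ X k ω) (t : E) :
    HasProd (fun k ↦ charFun (P.map (X k)) t) (charFun (P.map fun ω ↦ ∑' k, X k ω) t) := by
  have hlim : ∀ᵐ ω ∂P, Tendsto (fun s : Finset ι ↦ ∑ k ∈ s, X k ω) atTop (𝓝 (∑' k, X k ω)) :=
    hsum.mono fun ω hω ↦ hω.hasSum
  have hpartial : ∀ s : Finset ι, AEMeasurable (fun ω ↦ ∑ k ∈ s, X k ω) P := fun s ↦ by fun_prop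
  have hprod : ∀ s : Finset ι, ∏ k ∈ s, charFun (P.map (X k)) t =
      ∫ ω, Complex.exp (inner ℝ (∑ k ∈ s, X k ω) t * Complex.I) ∂P := fun s ↦ by
    rw [← Finset.prod_apply,
      ← (hindep.restrict _).charFun_map_fun_finsetSum_eq_prod fun k _ ↦ hX k,
      charFun_apply, integral_map (hpartial s) (by fun_prop)]
  rw [HasProd, charFun_apply, integral_map (aemeasurable_of_tendsto_metrizable_ae _ hpartial hlim)
    (by fun_prop)]
  simp only [SummationFilter.unconditional_filter, hprod]
  refine tendsto_integral_filter_of_dominated_convergence (fun _ ↦ 1)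
    (.of_forall fun s ↦ by fun_prop) (.of_forall fun s ↦ ae_of_all _ fun ω ↦ ?_)
    (integrable_const 1) ?_
  · rw [Complex.norm_exp_ofReal_mul_I]
  · filter_upwards [hlim] with ω hω
    exact ((Continuous.tendsto (by fun_prop :
      Continuous fun x : E ↦ Complex.exp (inner ℝ x t * Complex.I)) _).comp hω)

theorem exists_infinite_convolution [CompleteSpace E] (ν : ι → Measure E)
    [∀ k, IsProbabilityMeasure (ν k)] {r : ι → ℝ} (hr : Summable r)
    (hν : ∀ k, ∀ᵐ y ∂ν k, ‖y‖ ≤ r k) :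
    ∃ μ : Measure E, IsProbabilityMeasure μ ∧ (∀ᵐ y ∂μ, ‖y‖ ≤ ∑' k, r k) ∧
      ∀ t, HasProd (fun k ↦ charFun (ν k) t) (charFun μ t) := by
  obtain ⟨Ω, _, P, X, hX, hlaw, hindep, _⟩ := exists_hasLaw_indepFun (fun _ ↦ E) ν
  have hbound : ∀ᵐ ω ∂P, ∀ k, ‖X k ω‖ ≤ r k :=
    ae_all_iff.2 fun k ↦ ((hlaw k).ae_iff (p := (‖·‖ ≤ r k)) (by fun_prop)).2 (hν k)
  have hsum : ∀ᵐ ω ∂P, Summable fun k ↦ X k ω :=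
    hbound.mono fun ω hω ↦ .of_norm_bounded hr hω
  have hS : AEMeasurable (fun ω ↦ ∑' k, X k ω) P :=
    aemeasurable_of_tendsto_metrizable_ae atTop (f := fun (s : Finset ι) ω ↦ ∑ k ∈ s, X k ω)
      (fun s ↦ by fun_prop) (hsum.mono fun ω hω ↦ hω.hasSum)
  refine ⟨P.map fun ω ↦ ∑' k, X k ω, Measure.isProbabilityMeasure_map hS, ?_, fun t ↦ ?_⟩
  · rw [ae_map_iff hS (measurableSet_le (by fun_prop) (by fun_prop))]
    exact hbound.mono fun ω hω ↦ tsum_of_norm_bounded hr.hasSum hω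
  · simpa only [(hlaw _).map_eq] using
      hasProd_charFun_map_tsum (fun k ↦ (hX k).aemeasurable) hindep hsum t

end InfiniteConvolution

theorem charFun_bernoulliMeasure_neg_of_eq_half {p : unitInterval} (hp : (p : ℝ) = 1 / 2)
    (a t : ℝ) :
    charFun (bernoulliMeasure a (-a) p) t = Real.cos (a * t) := by
  rw [charFun_apply_real, integral_bernoulliMeasure, hp, Complex.ofReal_cos, Complex.cos,
    Complex.real_smul, Complex.real_smul]
  push_cast
  ring_nf

theorem exists_infinite_bernoulli_convolution {ι : Type*} [Countable ι] {a : ι → ℝ}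
    (ha : Summable fun k ↦ |a k|) :
    ∃ μ : Measure ℝ, IsProbabilityMeasure μ ∧ (∀ᵐ y ∂μ, |y| ≤ ∑' k, |a k|) ∧
      ∀ t : ℝ, HasProd (fun k ↦ (Real.cos (a k * t) : ℂ)) (charFun μ t) := by
  let p : unitInterval := ⟨1 / 2, by norm_num, by norm_num⟩
  have hsupp : ∀ k, ∀ᵐ y ∂bernoulliMeasure (a k) (-a k) p, ‖y‖ ≤ |a k| := fun k ↦ by
    simp [bernoulliMeasure_def, ae_add_measure_iff, Measure.ae_smul_measure]
  simpa only [charFun_bernoulliMeasure_neg_of_eq_half (p := p) rfl, Real.norm_eq_abs] using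
    exists_infinite_convolution (fun k ↦ bernoulliMeasure (a k) (-a k) p) ha hsupp

section TranslateAverage

variable {F : Type*} [NormedAddCommGroup F] [NormedSpace ℝ F]

/-- The convolution `ν ∗ h` of a measure with a function on the line: the average of the translates
`h (· - y)` with respect to `ν`. -/
noncomputable def translateAverage (ν : Measure ℝ) (h : ℝ → F) (x : ℝ) : F :=
  ∫ y, h (x - y) ∂ν

theorem periodic_deriv {f : ℝ → F} {c : ℝ} (hf : Function.Periodic f c) :
    Function.Periodic (deriv f) c := fun x ↦ by
  rw [← deriv_comp_add_const, funext hf]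

theorem periodic_translateAverage {c : ℝ} {h : ℝ → F} (ν : Measure ℝ)
    (hp : Function.Periodic h c) : Function.Periodic (translateAverage ν h) c := fun x ↦ by
  simp only [translateAverage, add_sub_right_comm, hp _]

variable (ν : Measure ℝ) [IsFiniteMeasure ν]

theorem hasDerivAt_translateAverage {h : ℝ → F} (hh : ContDiff ℝ 1 h)
    (hb : Bornology.IsBounded (range h)) (hb' : Bornology.IsBounded (range (deriv h))) (x : ℝ) :
    HasDerivAt (translateAverage ν h) (translateAverage ν (deriv h) x) x := by
  obtain ⟨C, hC⟩ := hb.exists_norm_le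
  obtain ⟨C', hC'⟩ := hb'.exists_norm_le
  have hcont : Continuous (deriv h) := hh.continuous_deriv_one
  refine (hasDerivAt_integral_of_dominated_loc_of_deriv_le (F := fun z y ↦ h (z - y))
    (F' := fun z y ↦ deriv h (z - y)) (bound := fun _ ↦ C') univ_mem
    (.of_forall fun z ↦ (hh.continuous.comp (by fun_prop)).aestronglyMeasurable)
    (.of_bound (hh.continuous.comp (by fun_prop)).aestronglyMeasurable C
      (ae_of_all _ fun y ↦ hC _ (mem_range_self _)))
    (hcont.comp (by fun_prop)).aestronglyMeasurable
    (ae_of_all _ fun y z _ ↦ hC' _ (mem_range_self _)) (integrable_const C')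
    (ae_of_all _ fun y z _ ↦ ?_)).2
  exact ((hh.differentiable one_ne_zero).differentiableAt.hasDerivAt).comp_sub_const z y

theorem contDiff_translateAverage {c : ℝ} (hc : c ≠ 0) {h : ℝ → F} (hh : ContDiff ℝ (⊤ : ℕ∞) h)
    (hp : Function.Periodic h c) : ContDiff ℝ (⊤ : ℕ∞) (translateAverage ν h) := by
  refine contDiff_infty.2 fun n ↦ ?_
  have hderiv : ∀ {h : ℝ → F}, ContDiff ℝ (⊤ : ℕ∞) h → Function.Periodic h c → ∀ x,
      HasDerivAt (translateAverage ν h) (translateAverage ν (deriv h) x) x := fun {h} hh hp ↦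
    hasDerivAt_translateAverage ν (hh.of_le (by exact_mod_cast le_top))
      (hp.isBounded_of_continuous hc hh.continuous)
      ((periodic_deriv hp).isBounded_of_continuous hc
        (hh.continuous_deriv (by exact_mod_cast le_top)))
  induction n generalizing h with
  | zero =>
    exact contDiff_zero.2 (continuous_iff_continuousAt.2 fun x ↦ (hderiv hh hp x).continuousAt)
  | succ n ih =>
    push_cast
    refine contDiff_succ_iff_deriv.2 ⟨fun x ↦ (hderiv hh hp x).differentiableAt, by simp, ?_⟩
    rw [funext fun x ↦ (hderiv hh hp x).deriv]
    exact ih (contDiff_infty_iff_deriv.1 hh).2 (periodic_deriv hp)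

end TranslateAverage

section FourierCoefficient

/-- The unnormalised `n`-th Fourier coefficient `∫₀^{2π} f(θ) e^{-inθ} dθ`. Mathlib's
`fourierCoeffOn` is this divided by the period. -/
noncomputable def fourierIntegralCoeff (f : ℝ → ℂ) (n : ℤ) : ℂ :=
  ∫ θ in (0 : ℝ)..(2 * π), f θ * Complex.exp (-Complex.I * n * θ)

variable {f : ℝ → ℂ}

theorem periodic_exp_neg_I_mul_int_mul (n : ℤ) :
    Function.Periodic (fun θ : ℝ ↦ Complex.exp (-Complex.I * n * θ)) (2 * π) := fun x ↦
  Complex.exp_eq_exp_iff_exists_int.2 ⟨-n, by push_cast; ring⟩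

theorem fourierIntegralCoeff_mul_exp (f : ℝ → ℂ) (m n : ℤ) :
    fourierIntegralCoeff (fun θ ↦ f θ * Complex.exp (Complex.I * m * θ)) n =
      fourierIntegralCoeff f (n - m) := by
  refine intervalIntegral.integral_congr fun θ _ ↦ ?_
  simp only [mul_assoc, ← Complex.exp_add]
  push_cast
  ring_nf

theorem fourierIntegralCoeff_const_mul (c : ℂ) (f : ℝ → ℂ) (n : ℤ) :
    fourierIntegralCoeff (fun θ ↦ c * f θ) n = c * fourierIntegralCoeff f n := by
  simp only [fourierIntegralCoeff, mul_assoc, intervalIntegral.integral_const_mul]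

theorem fourierIntegralCoeff_comp_sub (hp : Function.Periodic f (2 * π)) (y : ℝ) (n : ℤ) :
    fourierIntegralCoeff (fun θ ↦ f (θ - y)) n =
      Complex.exp (-Complex.I * n * y) * fourierIntegralCoeff f n := by
  let g : ℝ → ℂ := fun θ ↦ f θ * Complex.exp (-Complex.I * n * θ)
  have hg : Function.Periodic g (2 * π) := hp.mul (periodic_exp_neg_I_mul_int_mul n)
  calc fourierIntegralCoeff (fun θ ↦ f (θ - y)) n
      = ∫ θ in (0 : ℝ)..(2 * π), Complex.exp (-Complex.I * n * y) * g (θ - y) := by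
        refine intervalIntegral.integral_congr fun θ _ ↦ ?_
        simp only [g, mul_left_comm _ (f _), ← Complex.exp_add]
        push_cast
        ring_nf
    _ = Complex.exp (-Complex.I * n * y) * ∫ θ in (-y)..(-y + 2 * π), g θ := by
        rw [intervalIntegral.integral_const_mul, intervalIntegral.integral_comp_sub_right,
          zero_sub, neg_add_eq_sub]
    _ = Complex.exp (-Complex.I * n * y) * fourierIntegralCoeff f n := by
        rw [hg.intervalIntegral_add_eq (-y) 0, zero_add, fourierIntegralCoeff]

theorem fourierIntegralCoeff_sub {g : ℝ → ℂ} (hf : Continuous f) (hg : Continuous g) (n : ℤ) :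
    fourierIntegralCoeff (fun θ ↦ f θ - g θ) n =
      fourierIntegralCoeff f n - fourierIntegralCoeff g n := by
  simp only [fourierIntegralCoeff, sub_mul]
  exact intervalIntegral.integral_sub (Continuous.intervalIntegrable (by fun_prop) _ _)
    (Continuous.intervalIntegrable (by fun_prop) _ _)

theorem fourierIntegralCoeff_deriv (hf : ContDiff ℝ 1 f) (hp : Function.Periodic f (2 * π))
    (n : ℤ) : fourierIntegralCoeff (deriv f) n = Complex.I * n * fourierIntegralCoeff f n := by
  let e : ℝ → ℂ := fun θ ↦ Complex.exp (-Complex.I * n * θ)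
  have he : ∀ θ, HasDerivAt e (e θ * (-Complex.I * n)) θ := fun θ ↦ by
    simpa [e] using ((Complex.ofRealCLM.hasDerivAt (x := θ)).const_mul (-Complex.I * n)).cexp
  have hboundary : e (2 * π) * f (2 * π) - e 0 * f 0 = 0 :=
    sub_eq_zero.2 ((periodic_exp_neg_I_mul_int_mul n).mul hp).eq
  calc fourierIntegralCoeff (deriv f) n
      = ∫ θ in (0 : ℝ)..(2 * π), e θ * deriv f θ := by
        simp only [fourierIntegralCoeff, e, mul_comm]
    _ = -∫ θ in (0 : ℝ)..(2 * π), e θ * (-Complex.I * n) * f θ := by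
        rw [intervalIntegral.integral_mul_deriv_eq_deriv_mul (fun θ _ ↦ he θ)
          (fun θ _ ↦ (hf.differentiable one_ne_zero θ).hasDerivAt)
          (Continuous.intervalIntegrable (by fun_prop) _ _)
          (hf.continuous_deriv_one.intervalIntegrable _ _), hboundary, zero_sub]
    _ = Complex.I * n * fourierIntegralCoeff f n := by
        rw [fourierIntegralCoeff, ← intervalIntegral.integral_neg,
          ← intervalIntegral.integral_const_mul]
        exact intervalIntegral.integral_congr fun θ _ ↦ by simp only [e]; ring

theorem fourierIntegralCoeff_deriv_sub_const_mul (hf : ContDiff ℝ 1 f)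
    (hp : Function.Periodic f (2 * π)) (c : ℂ) (n : ℤ) :
    fourierIntegralCoeff (fun θ ↦ deriv f θ - c * f θ) n =
      (Complex.I * n - c) * fourierIntegralCoeff f n := by
  rw [fourierIntegralCoeff_sub (g := fun θ ↦ c * f θ) hf.continuous_deriv_one
    (continuous_const.mul hf.continuous), fourierIntegralCoeff_deriv hf hp,
    fourierIntegralCoeff_const_mul, sub_mul]

theorem fourierIntegralCoeff_translateAverage (ν : Measure ℝ) [IsFiniteMeasure ν]
    (hf : Continuous f) (hp : Function.Periodic f (2 * π)) (n : ℤ) :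
    fourierIntegralCoeff (translateAverage ν f) n = charFun ν (-n) * fourierIntegralCoeff f n := by
  obtain ⟨C, hC⟩ := (hp.isBounded_of_continuous Real.two_pi_pos.ne' hf).exists_norm_le
  have : IsFiniteMeasure (volume.restrict (uIoc 0 (2 * π))) :=
    inferInstanceAs (IsFiniteMeasure (volume.restrict (Ioc _ _)))
  have hint : Integrable
      (Function.uncurry fun (θ y : ℝ) ↦ f (θ - y) * Complex.exp (-Complex.I * n * θ))
      ((volume.restrict (uIoc 0 (2 * π))).prod ν) := by
    refine .of_bound (Continuous.aestronglyMeasurable (by fun_prop)) C (ae_of_all _ fun z ↦ ?_)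
    have : -Complex.I * n * z.1 = ((-n * z.1 : ℝ) : ℂ) * Complex.I := by push_cast; ring
    simpa only [Function.uncurry, norm_mul, this, Complex.norm_exp_ofReal_mul_I, mul_one] using
      hC _ (mem_range_self _)
  calc fourierIntegralCoeff (translateAverage ν f) n
      = ∫ θ in (0 : ℝ)..(2 * π), ∫ y, f (θ - y) * Complex.exp (-Complex.I * n * θ) ∂ν := by
        simp only [fourierIntegralCoeff, translateAverage, integral_mul_const]
    _ = ∫ y, fourierIntegralCoeff (fun θ ↦ f (θ - y)) n ∂ν := intervalIntegral_integral_swap hint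
    _ = charFun ν (-n) * fourierIntegralCoeff f n := by
        simp only [fourierIntegralCoeff_comp_sub hp, integral_mul_const, charFun_apply_real]
        push_cast
        ring_nf

theorem exists_ne_zero_of_fourierIntegralCoeff_ne_zero {n : ℤ}
    (h : fourierIntegralCoeff f n ≠ 0) : ∃ x, f x ≠ 0 := by
  contrapose! h
  simp [fourierIntegralCoeff, h]

end FourierCoefficient

section PeriodicBump

/-- `f` is a smooth `2π`-periodic function supported in the closed `η`-neighbourhood of `2πℤ`; the
distance to `2πℤ` is encoded as the norm on `AddCircle (2 * π)`. -/
structure IsPeriodicBump (η : ℝ) (f : ℝ → ℂ) : Prop where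
  contDiff : ContDiff ℝ (⊤ : ℕ∞) f
  periodic : Function.Periodic f (2 * π)
  support_subset : Function.support f ⊆ {x | ‖(x : AddCircle (2 * π))‖ ≤ η}

namespace IsPeriodicBump

variable {η : ℝ} {f : ℝ → ℂ}

theorem contDiff_one (hf : IsPeriodicBump η f) : ContDiff ℝ 1 f :=
  hf.contDiff.of_le (by exact_mod_cast le_top)

theorem deriv_sub_const_mul (hf : IsPeriodicBump η f) (c : ℂ) :
    IsPeriodicBump η fun x ↦ deriv f x - c * f x where
  contDiff := (contDiff_infty_iff_deriv.1 hf.contDiff).2.sub (contDiff_const.mul hf.contDiff)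
  periodic x := by simp only [periodic_deriv hf.periodic x, hf.periodic x]
  support_subset x hx := by
    have htsupport : tsupport f ⊆ {x : ℝ | ‖(x : AddCircle (2 * π))‖ ≤ η} :=
      closure_minimal hf.support_subset
        (isClosed_le (continuous_norm.comp (AddCircle.continuous_mk' _)) continuous_const)
    by_contra hη
    have hf0 : x ∉ tsupport f := mt (@htsupport x) hη
    have hf0' : deriv f x = 0 := Function.notMem_support.1 fun h ↦ hf0 (support_deriv_subset h)
    exact hx (by simp only [image_eq_zero_of_notMem_tsupport hf0, hf0', mul_zero, sub_zero])

theorem mono {η' : ℝ} (hf : IsPeriodicBump η f) (h : η ≤ η') : IsPeriodicBump η' f where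
  contDiff := hf.contDiff
  periodic := hf.periodic
  support_subset := hf.support_subset.trans fun _ hx ↦ le_trans hx h

theorem norm_le_of_apply_sub_ne_zero (hf : IsPeriodicBump η f) {x y : ℝ} (h : f (x - y) ≠ 0) :
    ‖(x : AddCircle (2 * π))‖ ≤ η + ‖(y : AddCircle (2 * π))‖ := by
  calc ‖(x : AddCircle (2 * π))‖
      ≤ ‖((x - y : ℝ) : AddCircle (2 * π))‖ + ‖(y : AddCircle (2 * π))‖ := by
        simpa using norm_add_le ((x - y : ℝ) : AddCircle (2 * π)) y
    _ ≤ η + ‖(y : AddCircle (2 * π))‖ := add_le_add_left (hf.support_subset h) _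

theorem translateAverage {ν : Measure ℝ} [IsFiniteMeasure ν] {ρ : ℝ} (hf : IsPeriodicBump η f)
    (hν : ∀ᵐ y ∂ν, |y| ≤ ρ) : IsPeriodicBump (η + ρ) (translateAverage ν f) where
  contDiff := contDiff_translateAverage ν Real.two_pi_pos.ne' hf.contDiff hf.periodic
  periodic := periodic_translateAverage ν hf.periodic
  support_subset x hx := by
    by_contra hηρ
    refine hx (integral_eq_zero_of_ae (hν.mono fun y hy ↦ ?_))
    by_contra hxy
    refine hηρ ?_
    exact (hf.norm_le_of_apply_sub_ne_zero hxy).trans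
      (add_le_add_right (QuotientAddGroup.norm_mk_le_norm.trans hy) η)

theorem const_mul (hf : IsPeriodicBump η f) (c : ℂ) : IsPeriodicBump η fun x ↦ c * f x where
  contDiff := contDiff_const.mul hf.contDiff
  periodic x := by simp only [hf.periodic x]
  support_subset := (Function.support_mul_subset_right _ f).trans hf.support_subset

theorem mul_exp (hf : IsPeriodicBump η f) (m : ℤ) :
    IsPeriodicBump η fun x ↦ f x * Complex.exp (Complex.I * m * x) where
  contDiff := hf.contDiff.mul (contDiff_const.mul Complex.ofRealCLM.contDiff).cexp
  periodic x := by
    simpa using (hf.periodic.mul (periodic_exp_neg_I_mul_int_mul (-m))) x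
  support_subset := (Function.support_mul_subset_left _ _).trans hf.support_subset

theorem comp_sub (hf : IsPeriodicBump η f) (y : ℝ) :
    IsPeriodicBump (η + ‖(y : AddCircle (2 * π))‖) fun x ↦ f (x - y) where
  contDiff := hf.contDiff.comp (contDiff_id.sub contDiff_const)
  periodic x := by simp only [add_sub_right_comm, hf.periodic _]
  support_subset _ hx := hf.norm_le_of_apply_sub_ne_zero hx

end IsPeriodicBump

theorem cos_norm_coe_addCircle (x : ℝ) : Real.cos ‖(x : AddCircle (2 * π))‖ = Real.cos x := by
  rw [AddCircle.norm_eq, Real.cos_abs, Real.cos_sub_int_mul_two_pi]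

theorem exists_isPeriodicBump {η : ℝ} (hη : 0 < η) :
    ∃ f, IsPeriodicBump η f ∧ fourierIntegralCoeff f 0 ≠ 0 := by
  have hη' : 0 < min η π := lt_min hη Real.pi_pos
  let r : ℝ → ℝ := fun x ↦ Real.smoothTransition (Real.cos x - Real.cos (min η π))
  have hr : ContDiff ℝ (⊤ : ℕ∞) r :=
    Real.smoothTransition.contDiff.comp (Real.contDiff_cos.sub contDiff_const)
  have hpos : 0 < ∫ x in (0 : ℝ)..(2 * π), r x :=
    intervalIntegral.integral_pos Real.two_pi_pos hr.continuous.continuousOn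
      (fun x _ ↦ Real.smoothTransition.nonneg _)
      ⟨0, left_mem_Icc.2 Real.two_pi_pos.le, Real.smoothTransition.pos_of_pos (sub_pos.2
        (Real.cos_lt_cos_of_nonneg_of_le_pi le_rfl (min_le_right _ _) hη'))⟩
  refine ⟨fun x ↦ r x, ⟨Complex.ofRealCLM.contDiff.comp hr, fun x ↦ by simp [r], fun x hx ↦ ?_⟩, ?_⟩
  · by_contra hx'
    have hlt : η < ‖(x : AddCircle (2 * π))‖ := not_le.1 hx'
    have hle : ‖(x : AddCircle (2 * π))‖ ≤ π := by
      simpa [abs_of_pos Real.pi_pos] using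
        AddCircle.norm_le_half_period (2 * π) (x := x) Real.two_pi_pos.ne'
    have hcos : Real.cos x ≤ Real.cos (min η π) := by
      rw [← cos_norm_coe_addCircle x]
      exact Real.cos_le_cos_of_nonneg_of_le_pi hη'.le hle ((min_le_left _ _).trans hlt.le)
    exact hx (by simp [r, Real.smoothTransition.zero_of_nonpos (sub_nonpos.2 hcos)])
  · simpa [fourierIntegralCoeff, intervalIntegral.integral_ofReal] using hpos.ne'

theorem exists_isPeriodicBump_vanishing_finset (F : Finset ℤ) (hF : 0 ∉ F) {η : ℝ} (hη : 0 < η) :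
    ∃ f, IsPeriodicBump η f ∧ fourierIntegralCoeff f 0 ≠ 0 ∧
      ∀ n ∈ F, fourierIntegralCoeff f n = 0 := by
  induction F using Finset.induction_on with
  | empty => simpa using exists_isPeriodicBump hη
  | insert k F _ ih =>
    obtain ⟨hk, hF⟩ := not_or.1 (mt Finset.mem_insert.2 hF)
    obtain ⟨f, hf, hf0, hfF⟩ := ih hF
    have hcoeff := fourierIntegralCoeff_deriv_sub_const_mul hf.contDiff_one hf.periodic
      (Complex.I * k)
    refine ⟨_, hf.deriv_sub_const_mul (Complex.I * k), ?_, fun n hn ↦ ?_⟩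
    · have hk' : (k : ℂ) ≠ 0 := by exact_mod_cast Ne.symm hk
      simpa [hcoeff, hk'] using hf0
    · rcases Finset.mem_insert.1 hn with rfl | hn
      · rw [hcoeff, sub_self, zero_mul]
      · rw [hcoeff, hfF n hn, mul_zero]

theorem exists_isPeriodicBump_vanishing_of_zero_notMem {A : Set ℤ} (hA0 : 0 ∉ A)
    (hA : Summable fun n : A ↦ |(n : ℝ)|⁻¹) {η : ℝ} (hη : 0 < η) :
    ∃ f, IsPeriodicBump η f ∧ fourierIntegralCoeff f 0 ≠ 0 ∧
      ∀ n ∈ A, fourierIntegralCoeff f n = 0 := by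
  let a : A → ℝ := fun n ↦ π / (2 * n)
  have ha : Summable fun n ↦ |a n| := (hA.mul_left (π / 2)).congr fun n ↦ by
    simp only [a, abs_div, abs_mul, abs_two, abs_of_pos Real.pi_pos]
    ring
  obtain ⟨F, hF⟩ := ((tendsto_tsum_compl_atTop_zero fun n ↦ |a n|).eventually_lt_const
    (half_pos hη)).exists
  obtain ⟨h, hh, hh0, hhF⟩ := exists_isPeriodicBump_vanishing_finset (F.image (↑))
    (by simpa using fun h ↦ (hA0 h).elim) (half_pos hη)
  obtain ⟨ν, _, hsupp, hprod⟩ := exists_infinite_bernoulli_convolution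
    (a := fun n : {n // n ∉ F} ↦ a n) (ha.comp_injective Subtype.val_injective)
  have hcoeff := fourierIntegralCoeff_translateAverage ν hh.contDiff.continuous hh.periodic
  refine ⟨translateAverage ν h, ?_, by simpa [hcoeff] using hh0, fun n hn ↦ ?_⟩
  · exact add_halves η ▸ hh.translateAverage (hsupp.mono fun y hy ↦ hy.trans hF.le)
  rw [hcoeff]
  by_cases hnF : ⟨n, hn⟩ ∈ F
  · rw [hhF n (Finset.mem_image_of_mem _ hnF), mul_zero]
  · have hn0 : (n : ℝ) ≠ 0 := by exact_mod_cast ne_of_mem_of_not_mem hn hA0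
    have hcos : Real.cos (a ⟨n, hn⟩ * -n) = 0 := by
      have hπ : a ⟨n, hn⟩ * n = π / 2 := by simp only [a]; field_simp
      rw [mul_neg, Real.cos_neg, hπ, Real.cos_pi_div_two]
    have hzero : charFun ν (-n) = 0 := (hprod (-n)).unique
      (hasProd_zero_of_exists_eq_zero ⟨⟨⟨n, hn⟩, hnF⟩, by rw [hcos, Complex.ofReal_zero]⟩)
    rw [hzero, zero_mul]

theorem exists_isPeriodicBump_vanishing {B : Set ℤ}
    (hB : Summable fun n : B ↦ |(n : ℝ)|⁻¹) {η : ℝ} (hη : 0 < η) :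
    ∃ f, IsPeriodicBump η f ∧ f 0 = 1 ∧ ∀ n ∈ B, fourierIntegralCoeff f n = 0 := by
  obtain ⟨m, hm⟩ := exists_notMem_of_summable_inv_abs hB
  obtain ⟨g, hg, hg0, hgB⟩ := exists_isPeriodicBump_vanishing_of_zero_notMem (A := (· + m) ⁻¹' B)
    (by simpa using hm) (summable_inv_abs_preimage_add hB m) (half_pos hη)
  obtain ⟨x, hx⟩ := exists_ne_zero_of_fourierIntegralCoeff_ne_zero hg0
  have hη' : η / 2 + ‖((-x : ℝ) : AddCircle (2 * π))‖ ≤ η := by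
    rw [AddCircle.coe_neg, norm_neg]
    exact (add_le_add_right (hg.support_subset hx) _).trans_eq (add_halves η)
  refine ⟨fun θ ↦ (g x)⁻¹ * g (θ - -x) * Complex.exp (Complex.I * m * θ),
    (((hg.comp_sub (-x)).const_mul _).mul_exp m).mono hη', by simp [hx], fun n hn ↦ ?_⟩
  rw [fourierIntegralCoeff_mul_exp, fourierIntegralCoeff_const_mul,
    fourierIntegralCoeff_comp_sub hg.periodic, hgB (n - m) (by simpa using hn), mul_zero, mul_zero]

end PeriodicBump

-- The term at `n = 0` is `0⁻¹ = 0`, so membership of `0` in `B` is unrestricted.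
theorem exists_smooth_periodic_fourier_vanishing_general {B : Set ℤ}
    (hB : Summable fun n : B ↦ |(n : ℝ)|⁻¹) {δ : ℝ} (hδ : 0 < δ) (θ₀ : ℝ) :
    ∃ f : ℝ → ℂ,
      ContDiff ℝ (⊤ : ℕ∞) f ∧
      Function.Periodic f (2 * π) ∧
      f θ₀ = 1 ∧
      (∀ θ : ℝ, (∀ k : ℤ, δ ≤ |θ - θ₀ - 2 * π * (k : ℝ)|) → f θ = 0) ∧
      ∀ n ∈ B, ∫ θ in (0 : ℝ)..(2 * π), f θ * Complex.exp (-Complex.I * n * θ) = 0 := by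
  obtain ⟨f, hf, hf0, hfB⟩ := exists_isPeriodicBump_vanishing hB (half_pos hδ)
  have hg := hf.comp_sub θ₀
  refine ⟨fun θ ↦ f (θ - θ₀), hg.contDiff, hg.periodic, by simpa using hf0, fun θ hθ ↦ ?_,
    fun n hn ↦ ?_⟩
  · by_contra hne
    have hle : ‖((θ - θ₀ : ℝ) : AddCircle (2 * π))‖ ≤ δ / 2 := hf.support_subset hne
    rw [AddCircle.norm_eq, mul_comm _ (2 * π)] at hle
    linarith [hθ (round ((2 * π)⁻¹ * (θ - θ₀)))]
  · rw [← fourierIntegralCoeff, fourierIntegralCoeff_comp_sub hf.periodic, hfB n hn, mul_zero]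

/-- If `B ⊆ ℤ` has counting function at most `C·T^α` with `0 ≤ α < 1`, then for every
`δ > 0` and `θ₀ ∈ ℝ` there is a smooth `2π`-periodic function `f : ℝ → ℂ` with
`f(θ₀) = 1`, vanishing at every point at distance at least `δ` from `θ₀ + 2πℤ`,
all of whose Fourier coefficients indexed by `B` vanish. -/
theorem exists_smooth_periodic_fourier_vanishing
    (α C : ℝ) (hα0 : 0 ≤ α) (hα1 : α < 1) (hC : 0 < C)
    (B : Set ℤ)
    (hcount : ∀ T : ℝ, 1 ≤ T →
      (({n : ℤ | n ∈ B ∧ |(n : ℝ)| ≤ T}).ncard : ℝ) ≤ C * T ^ α)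
    (δ : ℝ) (hδ : 0 < δ) (θ₀ : ℝ) :
    ∃ f : ℝ → ℂ,
      ContDiff ℝ (⊤ : ℕ∞) f ∧
      Function.Periodic f (2 * Real.pi) ∧
      f θ₀ = 1 ∧
      (∀ θ : ℝ, (∀ k : ℤ, δ ≤ |θ - θ₀ - 2 * Real.pi * (k : ℝ)|) → f θ = 0) ∧
      (∀ n : ℤ, n ∈ B →
        ∫ θ in (0 : ℝ)..(2 * Real.pi),
          f θ * Complex.exp (-Complex.I * (n : ℂ) * (θ : ℂ)) = 0) := by
  exact exists_smooth_periodic_fourier_vanishing_general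
    (by simpa only [Real.rpow_neg_one] using summable_rpow_neg_of_ncard_le_int hα0 hα1 hcount) hδ θ₀
end
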